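/- Let p be a prime and q a power of p with q ≠ 2 and q ≠ p². Let ℓ be an odd prime and t ≥ 1 an integer such that q is a primitive root modulo ℓ^t (i.e. q generates the multiplicative group of units modulo ℓ^t). Then h_q(2ℓ^t) = 0. -/

import Mathlib

noncomputable section

/-- The cyclic shift operator on `Fin n → F`, sending `(a_0, …, a_{n-1})`
to `(a_{n-1}, a_0, …, a_{n-2})`. -/
def cshift (F : Type*) [Field F] (n : ℕ) : (Fin n → F) →ₗ[F] (Fin n → F) where
  toFun a := a ∘ (finRotate n).symm
  map_add' _ _ := rfl
  map_smul' _ _ := rfl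

/-- A subspace `U ⊆ F^n` is cyclically covering if the union of its cyclic shifts is `F^n`. -/
def IsCyclicallyCovering {F : Type*} [Field F] {n : ℕ} (U : Submodule F (Fin n → F)) : Prop :=
  ⋃ i ∈ Finset.range n, ⇑(cshift F n ^ i) '' (U : Set (Fin n → F)) = Set.univ

/-- `hcc F n` is the largest possible codimension of a cyclically covering subspace of `F^n`. -/
def hcc (F : Type*) [Field F] (n : ℕ) : ℕ :=
  sSup {k : ℕ | ∃ U : Submodule F (Fin n → F),
    IsCyclicallyCovering U ∧ n - Module.finrank F U = k}

open Polynomial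

/-- The left shift on sequences. -/
def sqShift (F : Type*) [Field F] : (ℕ → F) →ₗ[F] (ℕ → F) := LinearMap.funLeft F F Nat.succ

theorem sqShift_pow {F : Type*} [Field F] (k : ℕ) (v : ℕ → F) (i : ℕ) :
    (sqShift F ^ k) v i = v (i + k) := by
  induction k generalizing v i with
  | zero => simp
  | succ k ih =>
    rw [pow_succ, Module.End.mul_apply, ih]
    simp [sqShift, LinearMap.funLeft_apply, add_assoc]

theorem aeval_sqShift {F : Type*} [Field F] (g : F[X]) (v : ℕ → F) (i : ℕ) :
    (aeval (sqShift F) g) v i = ∑ j ∈ Finset.range (g.natDegree + 1), g.coeff j * v (i + j) := by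
  rw [aeval_eq_sum_range]
  simp [LinearMap.sum_apply, Finset.sum_apply, sqShift_pow]

theorem ker_le_of_irred {F : Type*} [Field F] (g : F[X]) (hg : Irreducible g)
    (W : Submodule F (ℕ → F)) (hW : ∀ v ∈ W, sqShift F v ∈ W)
    (v : ℕ → F) (hv : v ∈ W) (hv0 : v ≠ 0) (hgv : aeval (sqShift F) g v = 0) :
    LinearMap.ker (aeval (sqShift F) g) ≤ W := by
  set K := LinearMap.ker (aeval (sqShift F) g) with hK
  set d := g.natDegree with hd
  have hpow : ∀ k, (sqShift F ^ k) v ∈ W := by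
    intro k
    induction k with
    | zero => simpa using hv
    | succ k ih => rw [pow_succ', Module.End.mul_apply]; exact hW _ ih
  have hpoly : ∀ r : F[X], aeval (sqShift F) r v ∈ W := by
    intro r
    rw [aeval_eq_sum_range, LinearMap.sum_apply]
    exact W.sum_mem fun j _ => W.smul_mem _ (hpow j)
  -- restriction to first d coordinates
  let R : K →ₗ[F] (Fin d → F) := (LinearMap.funLeft F F (fun i : Fin d => (i : ℕ))) ∘ₗ K.subtype
  have hR : Function.Injective R := by
    rw [injective_iff_map_eq_zero]
    rintro ⟨u, hu⟩ h
    have hu' : aeval (sqShift F) g u = 0 := hu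
    have h0 : ∀ i < d, u i = 0 := fun i hi => congrFun h ⟨i, hi⟩
    have : ∀ k, u k = 0 := by
      intro k
      induction k using Nat.strong_induction_on with
      | _ k ih =>
        by_cases hk : k < d
        · exact h0 k hk
        · have h1 := congrFun hu' (k - d)
          rw [aeval_sqShift, Finset.sum_range_succ, Finset.sum_eq_zero] at h1
          · have h2 : k - d + g.natDegree = k := by omega
            rw [h2] at h1
            have h3 : g.coeff g.natDegree ≠ 0 := by
              simpa using hg.ne_zero
            exact (mul_eq_zero.mp ((zero_add _).symm.trans h1)).resolve_left h3
          · intro j hj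
            rw [Finset.mem_range] at hj
            rw [ih _ (by omega), mul_zero]
    exact Subtype.ext (funext this)
  have hfin : FiniteDimensional F K := FiniteDimensional.of_injective R hR
  have hKd : Module.finrank F K ≤ d := by
    simpa using LinearMap.finrank_le_finrank_of_injective hR
  have hcomm : ∀ r : F[X], aeval (sqShift F) r v ∈ K := by
    intro r
    rw [hK, LinearMap.mem_ker, ← Module.End.mul_apply, ← map_mul, mul_comm, map_mul,
      Module.End.mul_apply, hgv, map_zero]
  let P : degreeLT F d →ₗ[F] K :=
    LinearMap.codRestrict K
      ((LinearMap.applyₗ v) ∘ₗ (aeval (sqShift F)).toLinearMap ∘ₗ (degreeLT F d).subtype)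
      (fun r => hcomm r)
  have hP : Function.Injective P := by
    rw [injective_iff_map_eq_zero]
    rintro ⟨r, hr⟩ h
    have h1 : aeval (sqShift F) r v = 0 := congrArg Subtype.val h
    by_contra hne
    have hr0 : r ≠ 0 := fun h => hne (Subtype.ext h)
    have hcop : IsCoprime g r := by
      rw [hg.coprime_iff_not_dvd]
      intro hdvd
      have h2 := degree_le_of_dvd hdvd hr0
      rw [mem_degreeLT] at hr
      rw [degree_eq_natDegree hg.ne_zero] at h2
      exact absurd hr (not_lt.mpr h2)
    obtain ⟨a, b, hab⟩ := hcop
    apply hv0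
    have h3 := congrArg (fun s => aeval (sqShift F) s v) hab
    simpa [hgv, h1] using h3.symm
  have hdim : Module.finrank F (degreeLT F d) = d := by
    rw [(degreeLTEquiv F d).finrank_eq]; simp
  have : FiniteDimensional F (degreeLT F d) := FiniteDimensional.of_injective P hP
  have hsurj : Function.Surjective P := by
    have h1 := LinearMap.finrank_le_finrank_of_injective hP
    exact (LinearMap.injective_iff_surjective_of_finrank_eq_finrank (by omega)).mp hP
  intro u hu
  obtain ⟨r, hr⟩ := hsurj ⟨u, hu⟩
  have : aeval (sqShift F) (r : F[X]) v = u := congrArg Subtype.val hr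
  rw [← this]
  exact hpoly _

theorem exists_sum_zero {F : Type*} [Field F] [Fintype F] (h2 : 2 < Fintype.card F) (k : ℕ) :
    ∃ c : ℕ → F, (∀ i, c i ≠ 0) ∧ ∑ i ∈ Finset.range (2 * k + 3), c i = 0 := by
  classical
  obtain ⟨a, ha⟩ : ∃ a : F, a ∉ ({0, -1} : Finset F) := by
    by_contra! h
    have h1 : (Finset.univ : Finset F) ⊆ {0, -1} := fun x _ => h x
    have := (Finset.card_le_card h1).trans Finset.card_le_two
    rw [Finset.card_univ] at this
    omega
  simp only [Finset.mem_insert, Finset.mem_singleton, not_or] at ha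
  refine ⟨fun i => if i = 0 then a else if i = 1 then -1 - a else (-1) ^ i, ?_, ?_⟩
  · intro i
    dsimp only
    split_ifs
    · exact ha.1
    · intro h
      exact ha.2 (by linear_combination -h)
    · exact pow_ne_zero _ (by simp)
  · induction k with
    | zero => simp [Finset.sum_range_succ]
    | succ k ih =>
      rw [show 2 * (k + 1) + 3 = 2 * k + 3 + 1 + 1 by ring, Finset.sum_range_succ,
        Finset.sum_range_succ, ih]
      simp [pow_succ]

theorem sum_mod_shift {F : Type*} [Field F] (l : ℕ) (hl : 0 < l) (c : ℕ → F) (k : ℕ) :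
    ∑ j ∈ Finset.range l, c ((k + j) % l) = ∑ j ∈ Finset.range l, c j := by
  induction k with
  | zero =>
    refine Finset.sum_congr rfl fun j hj => ?_
    rw [zero_add, Nat.mod_eq_of_lt (Finset.mem_range.mp hj)]
  | succ k ih =>
    rw [← ih]
    obtain ⟨m, rfl⟩ : ∃ m, l = m + 1 := ⟨l - 1, by omega⟩
    rw [Finset.sum_range_succ, Finset.sum_range_succ' (fun j => c ((k + j) % (m + 1)))]
    congr 1
    · refine Finset.sum_congr rfl fun j _ => ?_
      rw [show k + 1 + j = k + (j + 1) by ring]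
    · rw [show k + 1 + m = k + 0 + (m + 1) by ring, Nat.add_mod_right]

theorem exists_full {F : Type*} [Field F] [Fintype F] (h2 : 2 < Fintype.card F)
    (l : ℕ) (hl : l.Prime) (hlodd : Odd l) (t : ℕ)
    (hirr : ∀ s < t, Irreducible (cyclotomic (l ^ (s + 1)) F))
    (W : Submodule F (ℕ → F)) (hW : ∀ v ∈ W, sqShift F v ∈ W)
    (v : ℕ → F) (hv : v ∈ W) (hv0 : v ≠ 0) (hp : ∀ i, v (i + l ^ t) = v i) :
    ∃ w ∈ W, ∀ i, w i ≠ 0 := by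
  induction t generalizing v with
  | zero =>
    refine ⟨v, hv, ?_⟩
    have hc : ∀ i, v i = v 0 := by
      intro i
      induction i with
      | zero => rfl
      | succ i ih => rw [← ih]; simpa using hp i
    intro i hi
    apply hv0
    funext j
    rw [hc j, ← hc i, hi]; rfl
  | succ s ih =>
    have hpow : ∀ k, ∀ v ∈ W, (sqShift F ^ k) v ∈ W := by
      intro k
      induction k with
      | zero => intro v hv; simpa using hv
      | succ k ih => intro v hv; rw [pow_succ', Module.End.mul_apply]; exact hW _ (ih _ hv)
    by_cases hu : (sqShift F ^ (l ^ s)) v - v = 0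
    · refine ih (fun s' hs' => hirr s' (by omega)) v hv hv0 fun i => ?_
      have := congrFun hu i
      rw [Pi.sub_apply, sqShift_pow] at this
      exact sub_eq_zero.mp this
    · have : Fact l.Prime := ⟨hl⟩
      have hle := ker_le_of_irred _ (hirr s (by omega)) W hW _
        (W.sub_mem (hpow _ v hv) hv) hu (by
          have h1 := congrArg (fun g => aeval (sqShift F) g v)
            (cyclotomic_prime_pow_mul_X_pow_sub_one F l s)
          simp only [map_mul, map_sub, map_pow, aeval_X, map_one, Module.End.mul_apply,
            LinearMap.sub_apply, Module.End.one_apply] at h1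
          rw [map_sub, h1]
          funext i
          rw [Pi.sub_apply, sqShift_pow, hp, sub_self]; rfl)
      obtain ⟨k, hk⟩ : ∃ k, l = 2 * k + 3 := by
        obtain ⟨m, hm⟩ := hlodd
        have := hl.two_le
        exact ⟨m - 1, by omega⟩
      obtain ⟨c, hc0, hc⟩ := exists_sum_zero h2 k
      rw [← hk] at hc
      refine ⟨fun i => c ((i / l ^ s) % l), hle ?_, fun i => hc0 _⟩
      rw [LinearMap.mem_ker, cyclotomic_prime_pow_eq_geom_sum hl]
      funext i
      simp only [map_sum, map_pow, aeval_X, LinearMap.sum_apply, Finset.sum_apply, ← pow_mul,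
        sqShift_pow, Pi.zero_apply]
      rw [← hc, ← sum_mod_shift l hl.pos c (i / l ^ s)]
      refine Finset.sum_congr rfl fun j _ => ?_
      rw [Nat.add_mul_div_left _ _ (pow_pos hl.pos s)]

theorem exists_full_two {F : Type*} [Field F] [Fintype F] (h2 : 2 < Fintype.card F)
    (l : ℕ) (hl : l.Prime) (hlodd : Odd l) (t : ℕ)
    (hirr : ∀ s < t, Irreducible (cyclotomic (l ^ (s + 1)) F))
    (W : Submodule F (ℕ → F)) (hW : ∀ v ∈ W, sqShift F v ∈ W)
    (v : ℕ → F) (hv : v ∈ W) (hv0 : v ≠ 0) (hp : ∀ i, v (i + 2 * l ^ t) = v i) :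
    ∃ w ∈ W, ∀ i, w i ≠ 0 := by
  have hpow : ∀ k, ∀ v ∈ W, (sqShift F ^ k) v ∈ W := by
    intro k
    induction k with
    | zero => intro v hv; simpa using hv
    | succ k ih => intro v hv; rw [pow_succ', Module.End.mul_apply]; exact hW _ (ih _ hv)
  by_cases hu : (sqShift F ^ (l ^ t)) v - v = 0
  · refine exists_full h2 l hl hlodd t hirr W hW v hv hv0 fun i => ?_
    have := congrFun hu i
    rw [Pi.sub_apply, sqShift_pow] at this
    exact sub_eq_zero.mp this
  · let D : (ℕ → F) →ₗ[F] (ℕ → F) :=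
      { toFun := fun v i => (-1) ^ i * v i
        map_add' := fun a b => by funext i; simp [mul_add]
        map_smul' := fun a b => by funext i; simp [mul_left_comm] }
    have hD : ∀ v i, D v i = (-1) ^ i * v i := fun _ _ => rfl
    have hsgn : ∀ i : ℕ, ((-1 : F)) ^ i ≠ 0 := fun i => pow_ne_zero _ (by simp)
    obtain ⟨w, hw, hw0⟩ := exists_full h2 l hl hlodd t hirr (W.map D) (by
        rintro _ ⟨x, hx, rfl⟩
        refine ⟨-sqShift F x, W.neg_mem (hW x hx), ?_⟩
        funext i
        simp [hD, sqShift, LinearMap.funLeft_apply, pow_succ])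
      (D ((sqShift F ^ (l ^ t)) v - v)) ⟨_, W.sub_mem (hpow _ v hv) hv, rfl⟩ (by
        intro h
        apply hu
        funext i
        have := congrFun h i
        rw [hD] at this
        exact (mul_eq_zero.mp this).resolve_left (hsgn i)) (by
        intro i
        have ho : Odd (l ^ t) := hlodd.pow
        rw [hD, hD, Pi.sub_apply, Pi.sub_apply, sqShift_pow, sqShift_pow, pow_add, ho.neg_one_pow,
          add_assoc, ← two_mul, hp]
        ring)
    obtain ⟨x, hx, rfl⟩ := hw
    exact ⟨x, hx, fun i hi => hw0 i (by rw [hD, hi, mul_zero])⟩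

theorem cshift_pow_apply {F : Type*} [Field F] (n k : ℕ) (a : Fin n → F) :
    (cshift F n ^ k) a = a ∘ ((finRotate n).symm)^[k] := by
  induction k generalizing a with
  | zero => rfl
  | succ k ih =>
    rw [pow_succ, Module.End.mul_apply, ih]
    funext i
    simp only [Function.comp_apply, Function.iterate_succ_apply']
    rfl

theorem cshift_pow_self {F : Type*} [Field F] (n : ℕ) (hn : 0 < n) : cshift F n ^ n = 1 := by
  have : NeZero n := ⟨hn.ne_zero⟩
  have h1 : ∀ k (i : Fin n), ((finRotate n)^[k] i).val = (i.val + k) % n := by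
    intro k i
    induction k with
    | zero => simp [Nat.mod_eq_of_lt i.isLt]
    | succ k ih =>
      rw [Function.iterate_succ_apply', finRotate_apply, Fin.val_add, ih, Fin.val_one', ← Nat.add_mod, add_assoc]
  have h3 : ∀ i, (finRotate n)^[n] i = i := fun i => by
    ext
    rw [h1, Nat.add_mod_right, Nat.mod_eq_of_lt i.isLt]
  refine LinearMap.ext fun a => ?_
  rw [cshift_pow_apply]
  funext i
  have h2 : (finRotate n).symm^[n] ((finRotate n)^[n] i) = i :=
    (Function.LeftInverse.iterate (finRotate n).symm_apply_apply n) i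
  rw [h3] at h2
  rw [Function.comp_apply, h2]; rfl

theorem irred_cyc {F : Type*} [Field F] [Fintype F]
    (p : ℕ) (hp : p.Prime) (e : ℕ) (he : 0 < e)
    (hcard : Fintype.card F = p ^ e)
    (l : ℕ) (hl : l.Prime) (t : ℕ) (ht : 1 ≤ t)
    (hprim : orderOf ((Fintype.card F : ℕ) : ZMod (l ^ t)) = (l ^ t).totient) :
    Irreducible (cyclotomic (l ^ t) F) := by
  have : Fact p.Prime := ⟨hp⟩
  have hpos : 0 < (l ^ t).totient := Nat.totient_pos.mpr (pow_pos hl.pos t)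
  have hunit : IsUnit ((Fintype.card F : ℕ) : ZMod (l ^ t)) := by
    rw [← hprim, orderOf_pos_iff] at hpos
    exact hpos.isUnit
  rw [ZMod.isUnit_iff_coprime, hcard] at hunit
  have hcop : p.Coprime (l ^ t) := (Nat.coprime_pow_left_iff he _ _).mp hunit
  refine irreducible_of_dvd_cyclotomic_of_natDegree (p := p) (f := e) (n := l ^ t)
    hcard hcop dvd_rfl ?_
  rw [natDegree_cyclotomic, ← hprim, ← orderOf_units, ZMod.coe_unitOfCoprime, hcard]

/-- Let `q` be a power of a prime `p` with `q ≠ 2` and `q ≠ p²`, and let `ℓ` be an odd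
prime such that `q` is a primitive root modulo `ℓ^t` (`t ≥ 1`).  Then `h_q(2ℓ^t) = 0`. -/
theorem stmt12 (F : Type*) [Field F] [Fintype F]
    (p : ℕ) (hp : p.Prime) (e : ℕ) (he : 0 < e)
    (hcard : Fintype.card F = p ^ e)
    (hq2 : Fintype.card F ≠ 2) (hqp2 : Fintype.card F ≠ p ^ 2)
    (ℓ : ℕ) (hl : ℓ.Prime) (hlodd : Odd ℓ) (t : ℕ) (ht : 1 ≤ t)
    (hprim : orderOf ((Fintype.card F : ℕ) : ZMod (ℓ ^ t)) = (ℓ ^ t).totient) :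
    hcc F (2 * ℓ ^ t) = 0 := by
  classical
  have hq : 2 < Fintype.card F := by
    have := Fintype.one_lt_card (α := F)
    omega
  have hirr := irred_cyc p hp e he hcard ℓ hl t ht hprim
  set n := 2 * ℓ ^ t with hn
  have hn0 : 0 < n := by have := pow_pos hl.pos t; omega
  have key : ∀ U : Submodule F (Fin n → F), IsCyclicallyCovering U → U = ⊤ := by
    intro U hU
    by_contra hne
    obtain ⟨f, hf0, hf⟩ := U.exists_le_ker_of_lt_top (lt_top_iff_ne_top.mpr hne)
    let L : (Fin n → F) →ₗ[F] (ℕ → F) := LinearMap.pi fun i => f ∘ₗ (cshift F n ^ i)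
    have hL : ∀ x i, L x i = f ((cshift F n ^ i) x) := fun _ _ => rfl
    obtain ⟨x, hx⟩ : ∃ x, f x ≠ 0 := by
      by_contra! h
      exact hf0 (LinearMap.ext h)
    obtain ⟨w, ⟨y, rfl⟩, hy⟩ := exists_full_two hq ℓ hl hlodd t
      (fun s hs => cyclotomic_irreducible_pow_of_irreducible_pow hl (by omega) hirr)
      (LinearMap.range L) (by
        rintro _ ⟨x, rfl⟩
        refine ⟨cshift F n x, ?_⟩
        funext i
        simp only [sqShift, LinearMap.funLeft_apply, hL, Nat.succ_eq_add_one, pow_succ,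
          Module.End.mul_apply])
      (L x) ⟨x, rfl⟩ (by
        intro h
        exact hx (by simpa [hL] using congrFun h 0)) (by
        intro i
        rw [hL, hL, ← hn, pow_add, cshift_pow_self n hn0, mul_one])
    have hmem : y ∈ (Set.univ : Set (Fin n → F)) := Set.mem_univ y
    rw [← (show _ = Set.univ from hU)] at hmem
    simp only [Set.mem_iUnion, Finset.mem_range] at hmem
    obtain ⟨i, hi, u, hu, rfl⟩ := hmem
    apply hy (n - i)
    rw [hL, ← Module.End.mul_apply, ← pow_add, Nat.sub_add_cancel hi.le, cshift_pow_self n hn0]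
    exact hf hu
  unfold hcc
  apply Nat.eq_zero_of_le_zero
  apply csSup_le'
  rintro k ⟨U, hU, rfl⟩
  rw [key U hU]
  simp
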